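/- Two minimal representations are semantically equal if and only if they are equal as sets: for minimal representations U and V, max{⟦u⟧σ : u ∈ U} = max{⟦v⟧σ : v ∈ V} for every valuation σ if and only if U = V. -/

import Mathlib

/-- The impredicative maximum on natural numbers. -/
def imaxN : ℕ → ℕ → ℕ
  | _, 0 => 0
  | i, (j+1) => max i (j+1)

/-- Sublevels A(E,x,S) and B(E,S). -/
inductive SubLvl where
  | A : Finset ℕ → ℕ → ℕ → SubLvl
  | B : Finset ℕ → ℕ → SubLvl
deriving DecidableEq

/-- Value of a sublevel under a valuation. -/
def evalS (σ : ℕ → ℕ) : SubLvl → ℕ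
  | .A E x S => if ∃ y ∈ E, σ y = 0 then 0 else σ x + S
  | .B E S => if ∃ y ∈ E, σ y = 0 then 0 else S

/-- Wellformed sublevels. -/
def Wf : SubLvl → Prop
  | .A E x _ => x ∈ E
  | .B _ S => 0 < S

/-- Semantic comparison of sublevels. -/
def leT (u v : SubLvl) : Prop := ∀ σ : ℕ → ℕ, evalS σ u ≤ evalS σ v

/-- A minimal representation: a finite set of wellformed, pairwise
incomparable sublevels. -/
def MinRep (U : Finset SubLvl) : Prop :=
  (∀ u ∈ U, Wf u) ∧ ∀ u ∈ U, ∀ v ∈ U, u ≠ v → ¬ leT u v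

def sle : SubLvl → SubLvl → Prop
  | .A E x S, .A F y T => F ⊆ E ∧ y = x ∧ S ≤ T
  | .A _ _ _, .B _ _ => False
  | .B E S, .A F _ T => F ⊆ E ∧ S ≤ T + 1
  | .B E S, .B F T => F ⊆ E ∧ S ≤ T

def cst : SubLvl → ℕ
  | .A _ _ T => T
  | .B _ T => T

theorem sle_leT (u v : SubLvl) (hv : Wf v) (h : sle u v) : leT u v := by
  intro σ
  rcases u with ⟨E, x, S⟩ | ⟨E, S⟩ <;> rcases v with ⟨F, y, T⟩ | ⟨F, T⟩ <;>
    simp only [sle, Wf, evalS] at *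
  · obtain ⟨h1, rfl, h3⟩ := h
    split_ifs with a b b <;> first | omega | skip
    obtain ⟨z, hz, hz0⟩ := b
    exact absurd ⟨z, h1 hz, hz0⟩ a
  · obtain ⟨h1, h3⟩ := h
    split_ifs with a b b <;> first | omega | skip
    · obtain ⟨z, hz, hz0⟩ := b
      exact absurd ⟨z, h1 hz, hz0⟩ a
    · have : σ y ≠ 0 := fun h0 => a ⟨y, h1 hv, h0⟩
      omega
  · obtain ⟨h1, h3⟩ := h
    split_ifs with a b b <;> first | omega | skip
    obtain ⟨z, hz, hz0⟩ := b
    exact absurd ⟨z, h1 hz, hz0⟩ a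

theorem sle_antisymm (u v : SubLvl) (h : sle u v) (h' : sle v u) : u = v := by
  rcases u with ⟨E, x, S⟩ | ⟨E, S⟩ <;> rcases v with ⟨F, y, T⟩ | ⟨F, T⟩ <;>
    simp only [sle] at *
  · obtain ⟨h1, rfl, h3⟩ := h
    obtain ⟨h4, _, h6⟩ := h'
    rw [Finset.Subset.antisymm h1 h4, le_antisymm h3 h6]
  · obtain ⟨h1, h3⟩ := h
    obtain ⟨h4, h6⟩ := h'
    rw [Finset.Subset.antisymm h1 h4, le_antisymm h3 h6]

theorem key (u : SubLvl) (V : Finset SubLvl) (hu : Wf u) (hV : ∀ v ∈ V, Wf v)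
    (h : ∀ σ, evalS σ u ≤ V.sup (evalS σ)) : ∃ v ∈ V, sle u v := by
  rcases u with ⟨E, x, S⟩ | ⟨E, S⟩
  · simp only [Wf] at hu
    set N := V.sup cst + 2 with hN
    let σ : ℕ → ℕ := fun y => if y = x then N else if y ∈ E then 1 else 0
    have hσ : ∀ y, σ y = 0 → y ∉ E := by
      intro y hy hyE
      simp only [σ] at hy
      split_ifs at hy
    have hσ' : ∀ y, y ∉ E → σ y = 0 := by
      intro y hy
      have : y ≠ x := fun e => hy (e ▸ hu)
      simp [σ, hy, this]
    have h1 := h σ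
    have e : evalS σ (.A E x S) = N + S := by
      have : ¬ ∃ y ∈ E, σ y = 0 := fun ⟨y, hy, h0⟩ => hσ y h0 hy
      simp only [evalS, if_neg this]
      simp [σ]
    rw [e, Finset.le_sup_iff (by simp [hN])] at h1
    obtain ⟨v, hv, hle⟩ := h1
    refine ⟨v, hv, ?_⟩
    have hc : cst v ≤ V.sup cst := Finset.le_sup hv
    have hw := hV v hv
    rcases v with ⟨F, y, T⟩ | ⟨F, T⟩ <;> simp only [evalS, cst, Wf, sle] at *
    · split_ifs at hle with a
      · omega
      · have hF : F ⊆ E := fun z hz => by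
          by_contra hn
          exact a ⟨z, hz, hσ' z hn⟩
        have hyx : y = x := by
          by_contra hn
          have : σ y = 1 := by simp [σ, hn, hF hw]
          omega
        refine ⟨hF, hyx, ?_⟩
        have : σ y = N := by simp [σ, hyx]
        omega
    · split_ifs at hle <;> omega
  · simp only [Wf] at hu
    let σ : ℕ → ℕ := fun y => if y ∈ E then 1 else 0
    have h1 := h σ
    have e : evalS σ (.B E S) = S := by
      have : ¬ ∃ y ∈ E, σ y = 0 := fun ⟨y, hy, h0⟩ => by simp [σ, hy] at h0
      simp only [evalS, if_neg this]
    rw [e, Finset.le_sup_iff (by simpa using hu)] at h1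
    obtain ⟨v, hv, hle⟩ := h1
    refine ⟨v, hv, ?_⟩
    have hw := hV v hv
    have hF : ∀ F : Finset ℕ, (¬ ∃ y ∈ F, σ y = 0) → F ⊆ E := fun F a z hz => by
      by_contra hn
      exact a ⟨z, hz, by simp [σ, hn]⟩
    rcases v with ⟨F, y, T⟩ | ⟨F, T⟩ <;> simp only [evalS, Wf, sle] at * <;>
      split_ifs at hle with a <;> first | omega | skip
    · have : σ y = 1 := by simp [σ, hF F a hw]
      exact ⟨hF F a, by omega⟩
    · exact ⟨hF F a, hle⟩

theorem minrep_sub (U V : Finset SubLvl) (hU : MinRep U) (hV : MinRep V)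
    (h : ∀ σ : ℕ → ℕ, U.sup (evalS σ) = V.sup (evalS σ)) : U ⊆ V := by
  intro u hu
  obtain ⟨v, hv, huv⟩ := key u V (hU.1 u hu) hV.1
    (fun σ => (h σ) ▸ Finset.le_sup (f := evalS σ) hu)
  obtain ⟨w, hw, hvw⟩ := key v U (hV.1 v hv) hU.1
    (fun σ => (h σ).symm ▸ Finset.le_sup (f := evalS σ) hv)
  have huw : u = w := by
    by_contra hn
    exact hU.2 u hu w hw hn fun σ =>
      (sle_leT u v (hV.1 v hv) huv σ).trans (sle_leT v w (hU.1 w hw) hvw σ)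
  subst huw
  rw [sle_antisymm u v huv hvw]
  exact hv

theorem minrep_unique (U V : Finset SubLvl) (hU : MinRep U) (hV : MinRep V) :
    (∀ σ : ℕ → ℕ, U.sup (evalS σ) = V.sup (evalS σ)) ↔ U = V := by
  constructor
  · intro h
    exact Finset.Subset.antisymm (minrep_sub U V hU hV h)
      (minrep_sub V U hV hU fun σ => (h σ).symm)
  · rintro rfl σ
    rfl
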